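/- arXiv:2107.04845 — 6 statements merged into one kernel-verified Lean document; each statement's English description precedes it below -/
import Mathlib

section
/- Let m, n ≥ 1 and let (X₁,…,Xₘ,A) and (Y₁,…,Yₙ,B) be two independent random vectors (with X := (X₁,…,Xₘ) taking values in ℝᵐ, Y := (Y₁,…,Yₙ) in ℝⁿ, and A, B real-valued), where each Xᵢ and each Yⱼ is nondegenerate. Suppose that for all a, a' ∈ ℝᵐ and b, b' ∈ ℝⁿ with ‖a‖² + ‖b‖² = ‖a'‖² + ‖b'‖², the random variables ⟨a,X⟩ + ⟨b,Y⟩ + A + B and ⟨a',X⟩ + ⟨b',Y⟩ + A + B have the same distribution. Then the random variables X₁,…,Xₘ,Y₁,…,Yₙ are mutually independent and all have the same centered normal (Gaussian) distribution. -/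
open MeasureTheory ProbabilityTheory
open scoped NNReal BigOperators

/-!
Put `Z = (X, Y)`. For `t ≠ 0` the law of `⟨c / t, Z⟩ + A + B`, hence its characteristic function
`E exp(i (⟨c, Z⟩ + t (A + B)))` at `t`, depends on `c` only through `‖c‖`. Letting `t → 0` removes
`A + B`: the characteristic function `φ` of `Z` is radial. In particular `φ` is real, and evaluating
it along two independent coordinates gives Maxwell's functional equation
`φ(√(x² + y²) e) = φ(x e) φ(y e)` for a unit vector `e`. So `u ↦ φ(√u e)` is a continuous
homomorphism from `[0, ∞)` under addition to the reals under multiplication, that is, an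
exponential, and `φ` is the characteristic function of a product of equal centered Gaussians.
-/

open Function WithLp
open scoped RealInnerProductSpace

section NNRealCauchyEquation

lemma denseRange_nnratCast_nnreal : DenseRange ((↑) : ℚ≥0 → ℝ≥0) := by
  refine dense_of_exists_between fun a b hab ↦ ?_
  obtain ⟨q, haq, hqb⟩ := exists_rat_btwn (NNReal.coe_lt_coe.2 hab)
  lift q to ℚ≥0 using by exact_mod_cast a.coe_nonneg.trans haq.le
  exact ⟨q, ⟨q, rfl⟩, NNReal.coe_lt_coe.1 haq, NNReal.coe_lt_coe.1 hqb⟩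

lemma map_nnreal_smul
    {E F G : Type*} [AddCommMonoid E] [Module ℝ≥0 E] [TopologicalSpace E] [ContinuousSMul ℝ≥0 E]
    [AddCommMonoid F] [Module ℝ≥0 F] [TopologicalSpace F] [ContinuousSMul ℝ≥0 F] [T2Space F]
    [FunLike G E F] [AddMonoidHomClass G E F] (f : G) (hf : Continuous f) (c : ℝ≥0) (x : E) :
    f (c • x) = c • f x :=
  suffices (fun c : ℝ≥0 ↦ f (c • x)) = fun c ↦ c • f x from congrFun this c
  denseRange_nnratCast_nnreal.equalizer (by fun_prop) (by fun_prop)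
    (funext fun q ↦ map_nnratCast_smul f ℝ≥0 ℝ≥0 q x)

lemma addChar_nnreal_pos (ψ : AddChar ℝ≥0 ℝ) (hψ : Continuous ψ) (u : ℝ≥0) : 0 < ψ u := by
  have hpow (n : ℕ) (hn : n ≠ 0) : ψ (u / n) ^ n = ψ u := by
    rw [← ψ.map_nsmul_eq_pow, nsmul_eq_mul, mul_div_cancel₀ _ (by exact_mod_cast hn)]
  have hnonneg : 0 ≤ ψ u := hpow 2 two_ne_zero ▸ sq_nonneg _
  refine hnonneg.lt_of_ne' fun hzero ↦ zero_ne_one' ℝ ?_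
  have hroot (n : ℕ) : ψ (u / (n + 1 : ℕ)) = 0 :=
    eq_zero_of_pow_eq_zero ((hpow (n + 1) n.succ_ne_zero).trans hzero)
  have hlim : Filter.Tendsto (fun n : ℕ ↦ ψ (u / (n + 1 : ℕ))) Filter.atTop (nhds (ψ 0)) :=
    (hψ.tendsto 0).comp <|
      (tendsto_const_div_atTop_nhds_zero_nat u).comp (Filter.tendsto_add_atTop_nat 1)
  simp only [hroot, AddChar.map_zero_eq_one] at hlim
  exact tendsto_nhds_unique tendsto_const_nhds hlim

lemma exists_addChar_nnreal_eq_exp (ψ : AddChar ℝ≥0 ℝ) (hψ : Continuous ψ) :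
    ∃ a : ℝ, ∀ u : ℝ≥0, ψ u = Real.exp (a * u) := by
  have hpos := addChar_nnreal_pos ψ hψ
  let logψ : ℝ≥0 →+ ℝ :=
    { toFun := fun u ↦ Real.log (ψ u)
      map_zero' := by simp
      map_add' := fun u v ↦ by
        rw [ψ.map_add_eq_mul, Real.log_mul (hpos u).ne' (hpos v).ne'] }
  have hlogψ : Continuous logψ := hψ.log fun u ↦ (hpos u).ne'
  refine ⟨logψ 1, fun u ↦ ?_⟩
  have hlin : logψ u = u * logψ 1 := by
    simpa [NNReal.smul_def] using map_nnreal_smul logψ hlogψ u 1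
  rw [mul_comm, ← hlin]
  exact (Real.exp_log (hpos u)).symm

end NNRealCauchyEquation

section HerschelMaxwell

variable {E : Type*} [NormedAddCommGroup E] [InnerProductSpace ℝ E]

lemma exists_eq_exp_mul_norm_sq {φ : E → ℝ} (hcont : Continuous φ) (hzero : φ 0 = 1)
    (hradial : φ.FactorsThrough norm) {e f : E} (he : ‖e‖ = 1) (hf : ‖f‖ = 1) (hef : ⟪e, f⟫ = 0)
    (hmul : ∀ x y : ℝ, φ (x • e + y • f) = φ (x • e) * φ (y • f)) :
    ∃ a : ℝ, ∀ t, φ t = Real.exp (a * ‖t‖ ^ 2) := by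
  have hnorm (u v : ℝ≥0) : ‖√(u + v : ℝ) • e‖ = ‖√(u : ℝ) • e + √(v : ℝ) • f‖ := by
    have horth : ⟪√(u : ℝ) • e, √(v : ℝ) • f⟫ = 0 := by
      simp [inner_smul_left, inner_smul_right, hef]
    rw [norm_add_eq_sqrt_iff_real_inner_eq_zero.2 horth]
    simp [norm_smul, he, hf, abs_of_nonneg, Real.mul_self_sqrt]
  let ψ : AddChar ℝ≥0 ℝ :=
    { toFun := fun u ↦ φ (√(u : ℝ) • e)
      map_zero_eq_one' := by simpa using hzero
      map_add_eq_mul' := fun u v ↦ by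
        rw [NNReal.coe_add, hradial (hnorm u v), hmul]
        congr 1
        exact hradial (by simp [norm_smul, he, hf]) }
  obtain ⟨a, ha⟩ := exists_addChar_nnreal_eq_exp ψ <|
    show Continuous fun u : ℝ≥0 ↦ φ (√(u : ℝ) • e) by fun_prop
  refine ⟨a, fun t ↦ ?_⟩
  calc φ t = φ (√(‖t‖₊ ^ 2 : ℝ≥0) • e) := hradial (by simp [norm_smul, he])
    _ = Real.exp (a * ‖t‖ ^ 2) := by simpa only [NNReal.coe_pow, coe_nnnorm] using! ha (‖t‖₊ ^ 2)

variable [MeasurableSpace E] {μ : Measure E}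

lemma ofReal_re_charFun_of_factorsThrough_norm (hradial : (charFun μ).FactorsThrough norm) (t : E) :
    ((charFun μ t).re : ℂ) = charFun μ t := by
  rw [← Complex.conj_eq_iff_re, ← charFun_neg]
  exact hradial (norm_neg t)

lemma exists_charFun_eq_exp_neg_mul_norm_sq [BorelSpace E] [SecondCountableTopology E]
    [IsProbabilityMeasure μ] (hradial : (charFun μ).FactorsThrough norm)
    {e f : E} (he : ‖e‖ = 1) (hf : ‖f‖ = 1) (hef : ⟪e, f⟫ = 0)
    (hmul : ∀ x y : ℝ, charFun μ (x • e + y • f) = charFun μ (x • e) * charFun μ (y • f)) :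
    ∃ v : ℝ≥0, ∀ t, charFun μ t = Complex.exp (-(v * ‖t‖ ^ 2 / 2)) := by
  have hreal := ofReal_re_charFun_of_factorsThrough_norm hradial
  obtain ⟨a, ha⟩ := exists_eq_exp_mul_norm_sq (φ := fun t ↦ (charFun μ t).re)
    (by fun_prop) (by simp) (hradial.comp_left Complex.re) he hf hef fun x y ↦ by
      rw [hmul, ← hreal (x • e), ← hreal (y • f), ← Complex.ofReal_mul]
      simp only [Complex.ofReal_re]
  have ha_nonpos : a ≤ 0 := by
    have hle := (Complex.re_le_norm _).trans (norm_charFun_le_one (μ := μ) e)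
    simpa [ha, he] using hle
  obtain ⟨v, hv⟩ : ∃ v : ℝ≥0, (v : ℝ) = -2 * a := ⟨⟨-2 * a, by linarith⟩, rfl⟩
  refine ⟨v, fun t ↦ ?_⟩
  have hexp : (charFun μ t).re = Real.exp (-(v * ‖t‖ ^ 2 / 2)) := by
    rw [ha, hv]
    ring_nf
  rw [← hreal, hexp]
  push_cast
  rfl

end HerschelMaxwell

section CharFun

variable {Ω : Type*} [MeasurableSpace Ω] {P : Measure Ω}
  {E : Type*} [NormedAddCommGroup E] [InnerProductSpace ℝ E] [MeasurableSpace E] [BorelSpace E]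
  [SecondCountableTopology E] {Z : Ω → E}

lemma charFun_map_inner (hZ : AEMeasurable Z P) (c : E) (r : ℝ) :
    charFun (P.map fun ω ↦ ⟪Z ω, c⟫) r = charFun (P.map Z) (r • c) := by
  rw [charFun_apply_real, charFun_apply, integral_map (by fun_prop) (by fun_prop),
    integral_map hZ (by fun_prop)]
  simp [inner_smul_right]

lemma charFun_map_add_of_indepFun_inner [IsFiniteMeasure P] (hZ : AEMeasurable Z P) {s t : E}
    (hst : IndepFun (fun ω ↦ ⟪Z ω, s⟫) (fun ω ↦ ⟪Z ω, t⟫) P) :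
    charFun (P.map Z) (s + t) = charFun (P.map Z) s * charFun (P.map Z) t := by
  have hadd := congrFun (hst.charFun_map_fun_add_eq_mul (by fun_prop) (by fun_prop)) 1
  simpa only [← inner_add_right, Pi.mul_apply, charFun_map_inner hZ, one_smul] using hadd

lemma charFun_map_factorsThrough_norm [IsFiniteMeasure P] {W : Ω → ℝ} (hZ : AEMeasurable Z P)
    (hW : AEMeasurable W P)
    (hlaw : (fun c : E ↦ P.map fun ω ↦ ⟪Z ω, c⟫ + W ω).FactorsThrough norm) :
    (charFun (P.map Z)).FactorsThrough norm := by
  intro c c' hc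
  let ν : Measure (WithLp 2 (E × ℝ)) := P.map fun ω ↦ toLp 2 (Z ω, W ω)
  have hjoint (c : E) (r t : ℝ) : charFun ν (t • toLp 2 (c, r)) =
      charFun (P.map fun ω ↦ ⟪Z ω, c⟫ + r * W ω) t := by
    rw [← charFun_map_inner (by fun_prop)]
    simp
  have hne {t : ℝ} (ht : t ≠ 0) : charFun ν (toLp 2 (c, t)) = charFun ν (toLp 2 (c', t)) := by
    have hscale (c : E) : toLp 2 (c, t) = t • toLp 2 (t⁻¹ • c, (1 : ℝ)) := by
      simp [← toLp_smul, ht]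
    simp only [hscale, hjoint, one_mul]
    exact congrArg (charFun · t) (hlaw (by simp [norm_smul, hc]))
  have hcont (c : E) : Continuous fun t : ℝ ↦ charFun ν (toLp 2 (c, t)) := by fun_prop
  have hzero : charFun ν (toLp 2 (c, 0)) = charFun ν (toLp 2 (c', 0)) :=
    congrFun ((hcont c).ext_on (dense_compl_singleton 0) (hcont c') fun _ ↦ hne) 0
  have hmarginal (c : E) : charFun ν (toLp 2 (c, 0)) = charFun (P.map Z) c := by
    simpa [charFun_map_inner hZ] using hjoint c 0 1
  rwa [hmarginal, hmarginal] at hzero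

end CharFun

section Gaussian

variable {Ω : Type*} [MeasurableSpace Ω] {P : Measure Ω}

lemma ae_eq_zero_of_map_eq_gaussianReal_zero {X : Ω → ℝ} (hX : AEMeasurable X P)
    (hlaw : P.map X = gaussianReal 0 0) : X =ᵐ[P] fun _ ↦ 0 :=
  HasLaw.ae_eq_of_dirac ⟨hX, by rw [hlaw, gaussianReal_zero_var]⟩

variable {ι : Type*} [Fintype ι]

lemma map_eq_of_map_fun_eq_pi {𝓧 : ι → Type*} [∀ i, MeasurableSpace (𝓧 i)] {Z : ∀ i, Ω → 𝓧 i}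
    (hZ : ∀ i, AEMeasurable (Z i) P) {μ : ∀ i, Measure (𝓧 i)} [∀ i, IsProbabilityMeasure (μ i)]
    (hpi : P.map (fun ω i ↦ Z i ω) = Measure.pi μ) (i : ι) : P.map (Z i) = μ i := by
  rw [← (measurePreserving_eval μ i).map_eq, ← hpi,
    AEMeasurable.map_map_of_aemeasurable (measurable_pi_apply i).aemeasurable (by fun_prop)]
  rfl

variable {Z : ι → Ω → ℝ}

lemma map_eq_pi_gaussianReal_of_charFun [IsFiniteMeasure P] (hZ : ∀ i, AEMeasurable (Z i) P)
    {v : ℝ≥0}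
    (hchar : ∀ t, charFun (P.map fun ω ↦ toLp 2 (Z · ω)) t = Complex.exp (-(v * ‖t‖ ^ 2 / 2))) :
    P.map (fun ω i ↦ Z i ω) = Measure.pi fun _ ↦ gaussianReal 0 v := by
  refine charFun_eq_pi_iff.1 fun t ↦ ?_
  rw [AEMeasurable.map_map_of_aemeasurable (by fun_prop) (by fun_prop)]
  refine (hchar t).trans ?_
  simp only [charFun_gaussianReal, ← Complex.exp_sum]
  rw [← Complex.ofReal_pow, EuclideanSpace.real_norm_sq_eq]
  simp [Finset.mul_sum, Finset.sum_div]

lemma exists_map_eq_pi_gaussianReal [IsProbabilityMeasure P] {W : Ω → ℝ}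
    (hZ : ∀ i, AEMeasurable (Z i) P) (hW : AEMeasurable W P)
    {k l : ι} (hkl : k ≠ l) (hindep : IndepFun (Z k) (Z l) P)
    (hdist : ∀ c c' : ι → ℝ, ∑ i, c i ^ 2 = ∑ i, c' i ^ 2 →
      P.map (fun ω ↦ ∑ i, c i * Z i ω + W ω) = P.map fun ω ↦ ∑ i, c' i * Z i ω + W ω) :
    ∃ v : ℝ≥0, P.map (fun ω i ↦ Z i ω) = Measure.pi fun _ ↦ gaussianReal 0 v := by
  classical
  let V : Ω → EuclideanSpace ℝ ι := fun ω ↦ toLp 2 (Z · ω)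
  have hV : AEMeasurable V P := by fun_prop
  have hinner (c : EuclideanSpace ℝ ι) (ω : Ω) : ⟪V ω, c⟫ = ∑ i, c i * Z i ω := by
    simp [V, PiLp.inner_apply]
  have hradial : (charFun (P.map V)).FactorsThrough norm := by
    refine charFun_map_factorsThrough_norm hV hW fun c c' hc ↦ ?_
    simp only [hinner]
    exact hdist c c' (by simp only [← EuclideanSpace.real_norm_sq_eq, hc])
  have hmul (x y : ℝ) :
      charFun (P.map V) (x • EuclideanSpace.single k 1 + y • EuclideanSpace.single l 1) =
        charFun (P.map V) (x • EuclideanSpace.single k 1) *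
          charFun (P.map V) (y • EuclideanSpace.single l 1) := by
    refine charFun_map_add_of_indepFun_inner hV ?_
    simpa [hinner, inner_smul_right] using!
      hindep.comp (measurable_const_mul x) (measurable_const_mul y)
  have : IsProbabilityMeasure (P.map V) := Measure.isProbabilityMeasure_map hV
  obtain ⟨v, hv⟩ := exists_charFun_eq_exp_neg_mul_norm_sq
    hradial (by simp) (by simp) (by simp [EuclideanSpace.inner_single_left, hkl]) hmul
  exact ⟨v, map_eq_pi_gaussianReal_of_charFun hZ hv⟩

end Gaussian

theorem ejsmont_characterization_general
    {Ω : Type*} [MeasurableSpace Ω] {P : Measure Ω} [IsProbabilityMeasure P]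
    {ι : Type*} [Fintype ι] {Z : ι → Ω → ℝ} {W : Ω → ℝ}
    (hZ : ∀ i, AEMeasurable (Z i) P) (hW : AEMeasurable W P)
    {k l : ι} (hkl : k ≠ l) (hindep : IndepFun (Z k) (Z l) P)
    (hnd : ¬ ∃ c : ℝ, Z k =ᵐ[P] fun _ ↦ c)
    (hdist : ∀ c c' : ι → ℝ, ∑ i, c i ^ 2 = ∑ i, c' i ^ 2 →
      P.map (fun ω ↦ ∑ i, c i * Z i ω + W ω) = P.map fun ω ↦ ∑ i, c' i * Z i ω + W ω) :
    ∃ v : ℝ≥0, 0 < v ∧ iIndepFun Z P ∧ ∀ i, P.map (Z i) = gaussianReal 0 v := by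
  obtain ⟨v, hpi⟩ := exists_map_eq_pi_gaussianReal hZ hW hkl hindep hdist
  have hlaw (i : ι) : P.map (Z i) = gaussianReal 0 v := map_eq_of_map_fun_eq_pi hZ hpi i
  have hv : v ≠ 0 := by
    rintro rfl
    exact hnd ⟨0, ae_eq_zero_of_map_eq_gaussianReal_zero (hZ k) (hlaw k)⟩
  exact ⟨v, hv.pos, (iIndepFun_iff_map_fun_eq_pi_map hZ).2 (by simp only [hpi, hlaw]), hlaw⟩

/-- Generalized Ejsmont characterization: if `(X₁,…,Xₘ,A)` and `(Y₁,…,Yₙ,B)` are independent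
random vectors with each `Xᵢ`, `Yⱼ` nondegenerate, and the distribution of
`⟨a,X⟩ + ⟨b,Y⟩ + A + B` depends only on `‖a‖² + ‖b‖²`, then `X₁,…,Xₘ,Y₁,…,Yₙ` are mutually
independent and all have the same centered normal distribution. -/
theorem ejsmont_characterization
    {Ω : Type*} [MeasurableSpace Ω] (P : Measure Ω) [IsProbabilityMeasure P]
    (m n : ℕ) (hm : 1 ≤ m) (hn : 1 ≤ n)
    (X : Fin m → Ω → ℝ) (Y : Fin n → Ω → ℝ) (A B : Ω → ℝ)
    (hX : ∀ i, Measurable (X i)) (hY : ∀ j, Measurable (Y j))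
    (hA : Measurable A) (hB : Measurable B)
    (hindep : IndepFun (fun ω => ((fun i => X i ω), A ω)) (fun ω => ((fun j => Y j ω), B ω)) P)
    (hXnd : ∀ i, ¬ ∃ c : ℝ, X i =ᵐ[P] fun _ => c)
    (hYnd : ∀ j, ¬ ∃ c : ℝ, Y j =ᵐ[P] fun _ => c)
    (hdist : ∀ (a a' : Fin m → ℝ) (b b' : Fin n → ℝ),
      (∑ i, (a i) ^ 2) + (∑ j, (b j) ^ 2) = (∑ i, (a' i) ^ 2) + (∑ j, (b' j) ^ 2) →
      Measure.map (fun ω => (∑ i, a i * X i ω) + (∑ j, b j * Y j ω) + A ω + B ω) P =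
        Measure.map (fun ω => (∑ i, a' i * X i ω) + (∑ j, b' j * Y j ω) + A ω + B ω) P) :
    ∃ v : ℝ≥0, 0 < v ∧
      iIndepFun (Sum.elim X Y) P ∧
      (∀ i, Measure.map (X i) P = gaussianReal 0 v) ∧
      (∀ j, Measure.map (Y j) P = gaussianReal 0 v) := by
  have hindep₀ : IndepFun (X ⟨0, hm⟩) (Y ⟨0, hn⟩) P :=
    hindep.comp (φ := fun p : (Fin m → ℝ) × ℝ ↦ p.1 ⟨0, hm⟩)
      (ψ := fun p : (Fin n → ℝ) × ℝ ↦ p.1 ⟨0, hn⟩) (by fun_prop) (by fun_prop)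
  obtain ⟨v, hv, hind, hlaw⟩ := ejsmont_characterization_general (Z := Sum.elim X Y)
    (Sum.rec (fun i ↦ (hX i).aemeasurable) fun j ↦ (hY j).aemeasurable) (hA.add hB).aemeasurable
    Sum.inl_ne_inr hindep₀ (hXnd _) fun c c' hc ↦ by
      simpa [Fintype.sum_sum_type, add_assoc] using hdist _ _ _ _ (by simpa using hc)
  exact ⟨v, hv, hind, fun i ↦ hlaw (.inl i), fun j ↦ hlaw (.inr j)⟩
end

section
/- Let m, n ≥ 1 and let X = (X₁,…,Xₘ) ∈ ℝᵐ and Y = (Y₁,…,Yₙ) ∈ ℝⁿ be independent random vectors such that each Xᵢ and each Yⱼ is nondegenerate with E(Xᵢ²) = 1 and E(Yⱼ²) = 1. Then the following are equivalent: (i) for all a, a' ∈ ℝᵐ and b, b' ∈ ℝⁿ with ‖a‖² + ‖b‖² = 1 = ‖a'‖² + ‖b'‖², the random variables ⟨a,X⟩ + ⟨b,Y⟩ and ⟨a',X⟩ + ⟨b',Y⟩ have the same distribution; (ii) the random variables X₁,…,Xₘ,Y₁,…,Yₙ are mutually independent and each has the standard normal distribution N(0,1). -/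
open MeasureTheory ProbabilityTheory
open scoped NNReal BigOperators

/-!
Both vectors together form one family `Z`. If the law of `∑ k, c k * Z k` is constant on the unit
sphere, then by homogeneity `∑ k, c k * Z k` and `‖c‖ * Z i` have the same law for every `c`, and
all `Z k` have a common characteristic function `φ`. A single pair of independent members gives
`φ s * φ t = φ √(s² + t²)`. Iterating this, `∏ k, φ (t k) = φ ‖t‖`, which is the joint
characteristic function of `Z` at `t`, so the whole family is independent. It also gives
`φ (t / √n) ^ n = φ t`, so `φ` equals its own limit in the central limit theorem, which is Gaussian.
-/

section PythagoreanFunctions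

lemma apply_abs_eq_of_mul_eq_apply_sqrt {M : Type*} [MulOneClass M] {f : ℝ → M}
    (h0 : f 0 = 1) (hf : ∀ s t, f s * f t = f √(s ^ 2 + t ^ 2)) (t : ℝ) : f |t| = f t := by
  simpa [h0, Real.sqrt_sq_eq_abs] using (hf t 0).symm

variable {M : Type*} [CommMonoid M] {f : ℝ → M}

lemma prod_eq_apply_sqrt_sum_sq {ι : Type*} (h0 : f 0 = 1)
    (hf : ∀ s t, f s * f t = f √(s ^ 2 + t ^ 2)) (A : Finset ι) (t : ι → ℝ) :
    ∏ k ∈ A, f (t k) = f √(∑ k ∈ A, t k ^ 2) := by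
  classical
  induction A using Finset.induction_on with
  | empty => simp [h0]
  | insert k A hk ih =>
    rw [Finset.prod_insert hk, ih, hf, Real.sq_sqrt (A.sum_nonneg fun k _ ↦ sq_nonneg (t k)),
      Finset.sum_insert hk]

lemma apply_inv_sqrt_mul_pow (h0 : f 0 = 1)
    (hf : ∀ s t, f s * f t = f √(s ^ 2 + t ^ 2)) {n : ℕ} (hn : n ≠ 0) (t : ℝ) :
    f ((√n)⁻¹ * t) ^ n = f t := by
  have hsq : n * ((√n)⁻¹ * t) ^ 2 = t ^ 2 := by
    rw [mul_pow, inv_pow, Real.sq_sqrt n.cast_nonneg, mul_inv_cancel_left₀ (by exact_mod_cast hn)]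
  calc f ((√n)⁻¹ * t) ^ n = ∏ _k ∈ Finset.range n, f ((√n)⁻¹ * t) := by simp
    _ = f √(∑ _k ∈ Finset.range n, ((√n)⁻¹ * t) ^ 2) := prod_eq_apply_sqrt_sum_sq h0 hf _ _
    _ = f |t| := by simp [hsq, Real.sqrt_sq_eq_abs]
    _ = f t := apply_abs_eq_of_mul_eq_apply_sqrt h0 hf t

end PythagoreanFunctions

section CharFun

lemma integral_id_eq_zero_of_charFun_neg {μ : Measure ℝ} [IsFiniteMeasure μ]
    (hμ : ∀ t, charFun μ (-t) = charFun μ t) : ∫ x, x ∂μ = 0 := by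
  have hsymm : μ.map (fun x ↦ -1 * x) = μ := by
    refine Measure.ext_of_charFun (funext fun t ↦ ?_)
    rw [charFun_map_mul, neg_one_mul, hμ]
  have hneg : ∫ x, x ∂μ = -1 * ∫ x, x ∂μ := calc
    ∫ x, x ∂μ = ∫ x, x ∂(μ.map fun x ↦ -1 * x) := by rw [hsymm]
    _ = ∫ x, -1 * x ∂μ := integral_map (by fun_prop) (by fun_prop)
    _ = -1 * ∫ x, x ∂μ := integral_const_mul _ _
  linarith

lemma eq_gaussianReal_of_charFun_mul {μ : Measure ℝ} [IsProbabilityMeasure μ]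
    (hmul : ∀ s t, charFun μ s * charFun μ t = charFun μ √(s ^ 2 + t ^ 2))
    (hsq : ∫ x, x ^ 2 ∂μ = 1) : μ = gaussianReal 0 1 := by
  have h0 : charFun μ 0 = 1 := by simp
  have hmean : ∫ x, x ∂μ = 0 := integral_id_eq_zero_of_charFun_neg fun t ↦ by
    rw [← apply_abs_eq_of_mul_eq_apply_sqrt h0 hmul, abs_neg,
      apply_abs_eq_of_mul_eq_apply_sqrt h0 hmul]
  refine Measure.ext_of_charFun (funext fun t ↦ ?_)
  have hclt := tendsto_charFun_inv_sqrt_mul_pow (X := id) aemeasurable_id hmean hsq t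
  rw [Measure.map_id] at hclt
  have hconst : ∀ᶠ n : ℕ in Filter.atTop, charFun μ t = charFun μ ((√n)⁻¹ * t) ^ n := by
    filter_upwards [Filter.eventually_ne_atTop 0] with n hn
    exact (apply_inv_sqrt_mul_pow h0 hmul hn t).symm
  have hlim : charFun μ t = Complex.exp (-t ^ 2 / 2) :=
    tendsto_nhds_unique (tendsto_const_nhds.congr' hconst) hclt
  simp [hlim, charFun_gaussianReal, neg_div]

variable {Ω ι : Type*} [MeasurableSpace Ω] [Fintype ι] {P : Measure Ω} {Z : ι → Ω → ℝ}

lemma charFun_map_toLp_eq_charFun_map_sum (hZ : ∀ k, AEMeasurable (Z k) P)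
    (t : EuclideanSpace ℝ ι) :
    charFun (P.map fun ω ↦ WithLp.toLp 2 (Z · ω)) t =
      charFun (P.map fun ω ↦ ∑ k, t k * Z k ω) 1 := by
  rw [charFun_apply, charFun_apply, integral_map (by fun_prop) (by fun_prop),
    integral_map (by fun_prop) (by fun_prop)]
  simp [PiLp.inner_apply]

lemma hasLaw_sum_gaussianReal {m : ι → ℝ} {v : ι → ℝ≥0}
    (hindep : iIndepFun Z P) (hZ : ∀ k, HasLaw (Z k) (gaussianReal (m k) (v k)) P) :
    HasLaw (fun ω ↦ ∑ k, Z k ω) (gaussianReal (∑ k, m k) (∑ k, v k)) P := by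
  have := hindep.isProbabilityMeasure
  have hmeas k : AEMeasurable (Z k) P := (hZ k).aemeasurable
  have hsum : AEMeasurable (fun ω ↦ ∑ k, Z k ω) P := by fun_prop
  have := Measure.isProbabilityMeasure_map hsum
  refine ⟨hsum, Measure.ext_of_charFun (funext fun t ↦ ?_)⟩
  rw [hindep.charFun_map_fun_sum_eq_prod hmeas, Finset.prod_apply]
  simp only [(hZ _).map_eq, charFun_gaussianReal]
  rw [← Complex.exp_sum]
  simp [Finset.sum_sub_distrib, Finset.mul_sum, Finset.sum_mul, Finset.sum_div]

end CharFun

section SphereInvariant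

variable {Ω ι : Type*} [MeasurableSpace Ω] [Fintype ι] {P : Measure Ω} {Z : ι → Ω → ℝ}

/-- The law of the linear combination `∑ k, c k * Z k` is the same for all coefficient vectors `c`
on the Euclidean unit sphere; for `Z = (X, Y)` this is the first of the two equivalent
conditions. The sphere is written by coordinates, since `ι → ℝ` carries the sup norm. -/
def SphereInvariant (Z : ι → Ω → ℝ) (P : Measure Ω) : Prop :=
  ∀ c c' : ι → ℝ, ∑ k, c k ^ 2 = 1 → ∑ k, c' k ^ 2 = 1 →
    P.map (fun ω ↦ ∑ k, c k * Z k ω) = P.map (fun ω ↦ ∑ k, c' k * Z k ω)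

namespace SphereInvariant

lemma map_sum_eq_of_sum_sq_eq_one (h : SphereInvariant Z P) {c : ι → ℝ}
    (hc : ∑ k, c k ^ 2 = 1) (i : ι) : P.map (fun ω ↦ ∑ k, c k * Z k ω) = P.map (Z i) := by
  classical
  have hi := h c (Pi.single i 1) hc (by simp [Pi.single_apply, ite_pow])
  simpa [Pi.single_apply, ite_mul] using hi

lemma map_eq (h : SphereInvariant Z P) (i j : ι) : P.map (Z i) = P.map (Z j) := by
  classical
  have hj := h.map_sum_eq_of_sum_sq_eq_one (c := Pi.single i 1)
    (by simp [Pi.single_apply, ite_pow]) j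
  simpa [Pi.single_apply, ite_mul] using hj

lemma charFun_map_sum (h : SphereInvariant Z P) (hZ : ∀ k, AEMeasurable (Z k) P) (c : ι → ℝ)
    (i : ι) (t : ℝ) :
    charFun (P.map fun ω ↦ ∑ k, c k * Z k ω) t = charFun (P.map (Z i)) (√(∑ k, c k ^ 2) * t) := by
  set r := √(∑ k, c k ^ 2)
  have hr_sq : r ^ 2 = ∑ k, c k ^ 2 := Real.sq_sqrt (by positivity)
  rcases eq_or_ne r 0 with hr0 | hr0
  · have hc : ∀ k, c k = 0 := by
      have hsum : ∑ k, c k ^ 2 = 0 := by rw [← hr_sq, hr0, zero_pow two_ne_zero]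
      simpa [Finset.sum_eq_zero_iff_of_nonneg, sq_nonneg] using hsum
    rw [hr0, ← charFun_map_mul_comp (hZ i)]
    simp only [hc, zero_mul, Finset.sum_const_zero]
  · have hunit : ∑ k, (c k / r) ^ 2 = 1 := by
      simp_rw [div_pow]
      rw [← Finset.sum_div, ← hr_sq, div_self (pow_ne_zero 2 hr0)]
    have hscale : (fun ω ↦ ∑ k, c k * Z k ω) = fun ω ↦ r * ∑ k, c k / r * Z k ω := by
      funext ω
      rw [Finset.mul_sum]
      exact Finset.sum_congr rfl fun k _ ↦ by field_simp
    rw [hscale, charFun_map_mul_comp (by fun_prop), h.map_sum_eq_of_sum_sq_eq_one hunit i]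

variable {i j : ι}

lemma charFun_mul [IsFiniteMeasure P] (h : SphereInvariant Z P)
    (hZ : ∀ k, AEMeasurable (Z k) P) (hij : i ≠ j) (hindep : IndepFun (Z i) (Z j) P) (s t : ℝ) :
    charFun (P.map (Z i)) s * charFun (P.map (Z i)) t =
      charFun (P.map (Z i)) √(s ^ 2 + t ^ 2) := by
  classical
  set c : ι → ℝ := Pi.single i s + Pi.single j t with hc
  have hlin (ω : Ω) : ∑ k, c k * Z k ω = s * Z i ω + t * Z j ω := by
    simp [hc, Pi.single_apply, add_mul, Finset.sum_add_distrib]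
  have hnorm : ∑ k, c k ^ 2 = s ^ 2 + t ^ 2 := by
    rw [Fintype.sum_eq_add i j hij fun k hk ↦ by simp [hc, hk.1, hk.2]]
    simp [hc, hij, hij.symm]
  have hindep' : IndepFun (fun ω ↦ s * Z i ω) (fun ω ↦ t * Z j ω) P :=
    hindep.comp (measurable_const_mul s) (measurable_const_mul t)
  calc charFun (P.map (Z i)) s * charFun (P.map (Z i)) t
      = charFun (P.map fun ω ↦ s * Z i ω) 1 * charFun (P.map fun ω ↦ t * Z j ω) 1 := by
        rw [charFun_map_mul_comp (hZ i), charFun_map_mul_comp (hZ j), h.map_eq j i, mul_one,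
          mul_one]
    _ = charFun (P.map fun ω ↦ ∑ k, c k * Z k ω) 1 := by
        simp_rw [hlin]
        rw [hindep'.charFun_map_fun_add_eq_mul (by fun_prop) (by fun_prop), Pi.mul_apply]
    _ = charFun (P.map (Z i)) √(s ^ 2 + t ^ 2) := by
        rw [h.charFun_map_sum hZ c i, hnorm, mul_one]

variable [IsProbabilityMeasure P]

lemma iIndepFun_of_indepFun (h : SphereInvariant Z P) (hZ : ∀ k, AEMeasurable (Z k) P)
    (hij : i ≠ j) (hindep : IndepFun (Z i) (Z j) P) : iIndepFun Z P := by
  have := Measure.isProbabilityMeasure_map (hZ i)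
  refine (iIndepFun_iff_charFun_pi hZ).2 fun t ↦ ?_
  simp_rw [fun k ↦ h.map_eq k i]
  rw [charFun_map_toLp_eq_charFun_map_sum hZ, h.charFun_map_sum hZ _ i, mul_one,
    prod_eq_apply_sqrt_sum_sq (by simp) (h.charFun_mul hZ hij hindep)]

lemma map_eq_gaussianReal (h : SphereInvariant Z P) (hZ : ∀ k, AEMeasurable (Z k) P)
    (hij : i ≠ j) (hindep : IndepFun (Z i) (Z j) P) (hsq : ∫ ω, Z i ω ^ 2 ∂P = 1) (k : ι) :
    P.map (Z k) = gaussianReal 0 1 := by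
  have := Measure.isProbabilityMeasure_map (hZ i)
  rw [h.map_eq k i]
  refine eq_gaussianReal_of_charFun_mul (h.charFun_mul hZ hij hindep) ?_
  rwa [integral_map (hZ i) (by fun_prop)]

end SphereInvariant

lemma sphereInvariant_of_iIndepFun_gaussianReal (hindep : iIndepFun Z P)
    (hZ : ∀ k, HasLaw (Z k) (gaussianReal 0 1) P) : SphereInvariant Z P := by
  have hlaw (c : ι → ℝ) (hc : ∑ k, c k ^ 2 = 1) :
      P.map (fun ω ↦ ∑ k, c k * Z k ω) = gaussianReal 0 1 := by
    have hindep' : iIndepFun (fun k ω ↦ c k * Z k ω) P :=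
      hindep.comp (fun k x ↦ c k * x) fun k ↦ measurable_const_mul (c k)
    have hvar : ∑ k, NNReal.mk (c k ^ 2) (sq_nonneg _) = 1 := by
      ext
      simpa using hc
    have hsum := hasLaw_sum_gaussianReal hindep' fun k ↦ gaussianReal_const_mul (hZ k) (c k)
    simpa [hvar] using hsum.map_eq
  intro c c' hc hc'
  rw [hlaw c hc, hlaw c' hc']

lemma sphereInvariant_sumElim_iff {κ : Type*} [Fintype κ] {X : ι → Ω → ℝ} {Y : κ → Ω → ℝ} :
    SphereInvariant (Sum.elim X Y) P ↔
      ∀ (a a' : ι → ℝ) (b b' : κ → ℝ),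
        (∑ i, a i ^ 2) + (∑ j, b j ^ 2) = 1 → (∑ i, a' i ^ 2) + (∑ j, b' j ^ 2) = 1 →
        P.map (fun ω ↦ (∑ i, a i * X i ω) + (∑ j, b j * Y j ω)) =
          P.map (fun ω ↦ (∑ i, a' i * X i ω) + (∑ j, b' j * Y j ω)) := by
  simp only [SphereInvariant, Fintype.sum_sum_type, Sum.elim_inl, Sum.elim_inr]
  exact ⟨fun h a a' b b' ↦ h (Sum.elim a b) (Sum.elim a' b'), fun h c c' ↦ h _ _ _ _⟩

theorem ejsmont_characterization_iff_general [IsProbabilityMeasure P]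
    (hZ : ∀ k, AEMeasurable (Z k) P) {i j : ι} (hij : i ≠ j)
    (hindep : IndepFun (Z i) (Z j) P) (hsq : ∫ ω, Z i ω ^ 2 ∂P = 1) :
    SphereInvariant Z P ↔ iIndepFun Z P ∧ ∀ k, P.map (Z k) = gaussianReal 0 1 :=
  ⟨fun h ↦ ⟨h.iIndepFun_of_indepFun hZ hij hindep, h.map_eq_gaussianReal hZ hij hindep hsq⟩,
    fun h ↦ sphereInvariant_of_iIndepFun_gaussianReal h.1 fun k ↦ ⟨hZ k, h.2 k⟩⟩

end SphereInvariant

/-- For independent random vectors `X ∈ ℝᵐ`, `Y ∈ ℝⁿ` with nondegenerate components of unit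
second moment, the distribution of `⟨a,X⟩ + ⟨b,Y⟩` does not depend on `(a,b)` on the unit
sphere `‖a‖² + ‖b‖² = 1` if and only if `X₁,…,Xₘ,Y₁,…,Yₙ` are mutually independent standard
normal random variables. -/
theorem ejsmont_characterization_iff
    {Ω : Type*} [MeasurableSpace Ω] (P : Measure Ω) [IsProbabilityMeasure P]
    (m n : ℕ) (hm : 1 ≤ m) (hn : 1 ≤ n)
    (X : Fin m → Ω → ℝ) (Y : Fin n → Ω → ℝ)
    (hX : ∀ i, Measurable (X i)) (hY : ∀ j, Measurable (Y j))
    (hindep : IndepFun (fun ω => (fun i => X i ω)) (fun ω => (fun j => Y j ω)) P)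
    (hXnd : ∀ i, ¬ ∃ c : ℝ, X i =ᵐ[P] fun _ => c)
    (hYnd : ∀ j, ¬ ∃ c : ℝ, Y j =ᵐ[P] fun _ => c)
    (hX2 : ∀ i, ∫ ω, (X i ω) ^ 2 ∂P = 1)
    (hY2 : ∀ j, ∫ ω, (Y j ω) ^ 2 ∂P = 1) :
    (∀ (a a' : Fin m → ℝ) (b b' : Fin n → ℝ),
        (∑ i, (a i) ^ 2) + (∑ j, (b j) ^ 2) = 1 →
        (∑ i, (a' i) ^ 2) + (∑ j, (b' j) ^ 2) = 1 →
        Measure.map (fun ω => (∑ i, a i * X i ω) + (∑ j, b j * Y j ω)) P =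
          Measure.map (fun ω => (∑ i, a' i * X i ω) + (∑ j, b' j * Y j ω)) P)
      ↔
    (iIndepFun (Sum.elim X Y) P ∧
      (∀ i, Measure.map (X i) P = gaussianReal 0 1) ∧
      (∀ j, Measure.map (Y j) P = gaussianReal 0 1)) := by
  have hXY : IndepFun (X ⟨0, hm⟩) (Y ⟨0, hn⟩) P :=
    hindep.comp (measurable_pi_apply (⟨0, hm⟩ : Fin m)) (measurable_pi_apply (⟨0, hn⟩ : Fin n))
  have hmeas : ∀ k, AEMeasurable (Sum.elim X Y k) P :=
    Sum.rec (fun i ↦ (hX i).aemeasurable) fun j ↦ (hY j).aemeasurable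
  rw [← sphereInvariant_sumElim_iff, ejsmont_characterization_iff_general hmeas
    (i := .inl ⟨0, hm⟩) (j := .inr ⟨0, hn⟩) Sum.inl_ne_inr hXY (hX2 _), Sum.forall]
  simp only [Sum.elim_inl, Sum.elim_inr]
end

section
/- Let m, n ≥ 1 and let X = (X₁,…,Xₘ,A) ∈ ℝᵐ⁺¹ and (Y₁,…,Yₙ,B) ∈ ℝⁿ⁺¹ be random vectors, X := (X₁,…,Xₘ), Y := (Y₁,…,Yₙ). Suppose that for all a, a' ∈ ℝᵐ and b, b' ∈ ℝⁿ with ‖a‖² + ‖b‖² = ‖a'‖² + ‖b'‖², the random variables ⟨a,X⟩ + ⟨b,Y⟩ + A + B and ⟨a',X⟩ + ⟨b',Y⟩ + A + B have the same distribution. Then for all a, a' ∈ ℝᵐ and b, b' ∈ ℝⁿ with ‖a‖² + ‖b‖² = ‖a'‖² + ‖b'‖², the random variables ⟨a,X⟩ + ⟨b,Y⟩ and ⟨a',X⟩ + ⟨b',Y⟩ have the same distribution. -/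
open MeasureTheory ProbabilityTheory
open scoped BigOperators

/-! After scaling `(a, b)` and `(a', b')` by the same `r ≠ 0`, the hypothesis says that `r S + C`
and `r S' + C` have the same distribution, where `S = ⟨a, X⟩ + ⟨b, Y⟩`, `S' = ⟨a', X⟩ + ⟨b', Y⟩`
and `C = A + B`. Dividing by `r`, so do `S + r⁻¹ C` and `S' + r⁻¹ C`; now let `r → ∞`. -/

open Bornology Filter Topology BoundedContinuousFunction

section ScaledSum

variable {Ω Ω' 𝕜 E : Type*} [MeasurableSpace Ω] [MeasurableSpace Ω']
  [TopologicalSpace E] [SecondCountableTopology E] [MeasurableSpace E] [BorelSpace E]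
  [AddCommMonoid E] [ContinuousAdd E]
  {P : Measure Ω} [IsFiniteMeasure P] {P' : Measure Ω'} [IsFiniteMeasure P']
  {S C : Ω → E} {S' C' : Ω' → E}

theorem continuous_integral_add_smul [Semiring 𝕜] [TopologicalSpace 𝕜]
    [FirstCountableTopology 𝕜] [Module 𝕜 E] [ContinuousSMul 𝕜 E]
    (f : E →ᵇ ℝ) (hS : AEMeasurable S P) (hC : AEMeasurable C P) :
    Continuous fun c : 𝕜 => ∫ ω, f (S ω + c • C ω) ∂P := by
  refine continuous_of_dominated (bound := fun _ => ‖f‖) (fun c => ?_)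
    (fun c => .of_forall fun ω => f.norm_coe_le_norm _) (integrable_const _)
    (.of_forall fun ω => by fun_prop)
  exact (f.continuous.measurable.comp_aemeasurable
    (hS.add (hC.const_smul c))).aestronglyMeasurable

variable [NormedDivisionRing 𝕜] [Module 𝕜 E] [ContinuousSMul 𝕜 E]

theorem tendsto_integral_inv_smul_map_smul_add (f : E →ᵇ ℝ)
    (hS : AEMeasurable S P) (hC : AEMeasurable C P) :
    Tendsto (fun r : 𝕜 => ∫ x, f (r⁻¹ • x) ∂P.map (fun ω => r • S ω + C ω)) (cobounded 𝕜)
      (𝓝 (∫ x, f x ∂P.map S)) := by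
  have tendsto_perturbed : Tendsto (fun r : 𝕜 => ∫ ω, f (S ω + r⁻¹ • C ω) ∂P) (cobounded 𝕜)
      (𝓝 (∫ ω, f (S ω) ∂P)) := by
    simpa only [Function.comp_def, zero_smul, add_zero] using
      ((continuous_integral_add_smul f hS hC).tendsto (0 : 𝕜)).comp tendsto_inv₀_cobounded
  rw [integral_map hS f.continuous.measurable.aestronglyMeasurable]
  refine tendsto_perturbed.congr' ?_
  filter_upwards [eventually_ne_cobounded (0 : 𝕜)] with r hr
  have continuous_rescaled : Continuous fun x => f (r⁻¹ • x) := by fun_prop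
  have aemeasurable_sum : AEMeasurable (fun ω => r • S ω + C ω) P := (hS.const_smul r).add hC
  rw [integral_map aemeasurable_sum continuous_rescaled.measurable.aestronglyMeasurable]
  simp only [smul_add, inv_smul_smul₀ hr]

theorem map_eq_of_frequently_map_smul_add_eq [HasOuterApproxClosed E]
    (hS : AEMeasurable S P) (hC : AEMeasurable C P)
    (hS' : AEMeasurable S' P') (hC' : AEMeasurable C' P')
    (h : ∃ᶠ r in cobounded 𝕜,
      P.map (fun ω => r • S ω + C ω) = P'.map (fun ω => r • S' ω + C' ω)) :
    P.map S = P'.map S' :=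
  ext_of_forall_integral_eq_of_IsFiniteMeasure fun f =>
    tendsto_nhds_unique_of_frequently_eq
      (tendsto_integral_inv_smul_map_smul_add f hS hC)
      (tendsto_integral_inv_smul_map_smul_add f hS' hC')
      (h.mono fun r hr => by rw [hr])

end ScaledSum

theorem dist_drop_translation_general
    {Ω 𝕜 E ι κ : Type*} [MeasurableSpace Ω] (P : Measure Ω) [IsFiniteMeasure P]
    [NontriviallyNormedField 𝕜] [AddCommMonoid E] [Module 𝕜 E] [TopologicalSpace E]
    [ContinuousAdd E] [ContinuousSMul 𝕜 E] [SecondCountableTopology E] [HasOuterApproxClosed E]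
    [MeasurableSpace E] [BorelSpace E] [Fintype ι] [Fintype κ]
    {X : ι → Ω → E} {Y : κ → Ω → E} {A B : Ω → E}
    (hX : ∀ i, AEMeasurable (X i) P) (hY : ∀ j, AEMeasurable (Y j) P)
    (hA : AEMeasurable A P) (hB : AEMeasurable B P)
    (hdist : ∀ (a a' : ι → 𝕜) (b b' : κ → 𝕜),
      (∑ i, a i ^ 2) + (∑ j, b j ^ 2) = (∑ i, a' i ^ 2) + (∑ j, b' j ^ 2) →
      P.map (fun ω => (∑ i, a i • X i ω) + (∑ j, b j • Y j ω) + A ω + B ω) =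
        P.map (fun ω => (∑ i, a' i • X i ω) + (∑ j, b' j • Y j ω) + A ω + B ω))
    (a a' : ι → 𝕜) (b b' : κ → 𝕜)
    (hab : (∑ i, a i ^ 2) + (∑ j, b j ^ 2) = (∑ i, a' i ^ 2) + (∑ j, b' j ^ 2)) :
    P.map (fun ω => (∑ i, a i • X i ω) + (∑ j, b j • Y j ω)) =
      P.map (fun ω => (∑ i, a' i • X i ω) + (∑ j, b' j • Y j ω)) := by
  have aemeasurable_comb (c : ι → 𝕜) (d : κ → 𝕜) :
      AEMeasurable (fun ω => (∑ i, c i • X i ω) + (∑ j, d j • Y j ω)) P :=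
    (Finset.aemeasurable_fun_sum _ fun i _ => (hX i).const_smul (c i)).add
      (Finset.aemeasurable_fun_sum _ fun j _ => (hY j).const_smul (d j))
  have map_scaled_eq (r : 𝕜) :
      P.map (fun ω => r • ((∑ i, a i • X i ω) + (∑ j, b j • Y j ω)) + (A ω + B ω)) =
        P.map (fun ω => r • ((∑ i, a' i • X i ω) + (∑ j, b' j • Y j ω)) + (A ω + B ω)) := by
    have scaled_sq_eq : (∑ i, (r * a i) ^ 2) + (∑ j, (r * b j) ^ 2) =
        (∑ i, (r * a' i) ^ 2) + (∑ j, (r * b' j) ^ 2) := by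
      simp only [mul_pow, ← Finset.mul_sum, ← mul_add, hab]
    simpa only [mul_smul, ← Finset.smul_sum, ← smul_add, add_assoc] using
      hdist _ _ _ _ scaled_sq_eq
  exact map_eq_of_frequently_map_smul_add_eq (𝕜 := 𝕜) (aemeasurable_comb a b) (hA.add hB)
    (aemeasurable_comb a' b') (hA.add hB) (Frequently.of_forall map_scaled_eq)

/-- If the distribution of `⟨a,X⟩ + ⟨b,Y⟩ + A + B` depends only on `‖a‖² + ‖b‖²`, then the
distribution of `⟨a,X⟩ + ⟨b,Y⟩` also depends only on `‖a‖² + ‖b‖²`. -/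
theorem dist_drop_translation
    {Ω : Type*} [MeasurableSpace Ω] (P : Measure Ω) [IsProbabilityMeasure P]
    (m n : ℕ) (hm : 1 ≤ m) (hn : 1 ≤ n)
    (X : Fin m → Ω → ℝ) (Y : Fin n → Ω → ℝ) (A B : Ω → ℝ)
    (hX : ∀ i, Measurable (X i)) (hY : ∀ j, Measurable (Y j))
    (hA : Measurable A) (hB : Measurable B)
    (hdist : ∀ (a a' : Fin m → ℝ) (b b' : Fin n → ℝ),
      (∑ i, (a i) ^ 2) + (∑ j, (b j) ^ 2) = (∑ i, (a' i) ^ 2) + (∑ j, (b' j) ^ 2) →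
      Measure.map (fun ω => (∑ i, a i * X i ω) + (∑ j, b j * Y j ω) + A ω + B ω) P =
        Measure.map (fun ω => (∑ i, a' i * X i ω) + (∑ j, b' j * Y j ω) + A ω + B ω) P) :
    ∀ (a a' : Fin m → ℝ) (b b' : Fin n → ℝ),
      (∑ i, (a i) ^ 2) + (∑ j, (b j) ^ 2) = (∑ i, (a' i) ^ 2) + (∑ j, (b' j) ^ 2) →
      Measure.map (fun ω => (∑ i, a i * X i ω) + (∑ j, b j * Y j ω)) P =
        Measure.map (fun ω => (∑ i, a' i * X i ω) + (∑ j, b' j * Y j ω)) P :=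
  dist_drop_translation_general P (fun i => (hX i).aemeasurable) (fun j => (hY j).aemeasurable)
    hA.aemeasurable hB.aemeasurable hdist
end

section
/- Let m, n ≥ 1, let X ∈ ℝᵐ and Y ∈ ℝⁿ be independent random vectors, and suppose there exists a function h : [0,∞) → ℂ such that E[e^{i(⟨a,X⟩ + ⟨b,Y⟩)}] = h(‖a‖² + ‖b‖²) for all a ∈ ℝᵐ and b ∈ ℝⁿ. Then h(s + t) = h(s)·h(t) for all s, t ≥ 0, and moreover h(‖a‖²) = E[e^{i⟨a,X⟩}] for all a ∈ ℝᵐ and h(‖b‖²) = E[e^{i⟨b,Y⟩}] for all b ∈ ℝⁿ. -/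
open MeasureTheory ProbabilityTheory
open scoped BigOperators

/-!
Independence factors the joint characteristic function into `φ_X a * φ_Y b`, which is therefore
equal to `h (‖a‖² + ‖b‖²)`. A characteristic function is `1` at the origin, so setting `b = 0` or
`a = 0` identifies `φ_X` and `φ_Y` with `h ∘ ‖·‖²`. The Cauchy equation follows because every
nonnegative real is a squared norm in a nontrivial space.
-/

open WithLp (toLp)
open scoped RealInnerProductSpace

lemma exists_norm_sq_eq (E : Type*) [SeminormedAddCommGroup E] [NormedSpace ℝ E]
    [NontrivialTopology E] {r : ℝ} (hr : 0 ≤ r) : ∃ a : E, ‖a‖ ^ 2 = r := by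
  obtain ⟨a, ha⟩ := exists_norm_eq E (Real.sqrt_nonneg r)
  exact ⟨a, by rw [ha, Real.sq_sqrt hr]⟩

section RadialProduct

variable {E F M : Type*} [MulOneClass M] {φ : E → M} {ψ : F → M} {h : ℝ → M}

lemma radial_eq_left_of_mul_eq_radial [SeminormedAddGroup E] [SeminormedAddGroup F]
    (hψ : ψ 0 = 1) (hh : ∀ a b, φ a * ψ b = h (‖a‖ ^ 2 + ‖b‖ ^ 2)) (a : E) :
    h (‖a‖ ^ 2) = φ a := by
  simpa [hψ] using (hh a 0).symm

lemma radial_eq_right_of_mul_eq_radial [SeminormedAddGroup E] [SeminormedAddGroup F]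
    (hφ : φ 0 = 1) (hh : ∀ a b, φ a * ψ b = h (‖a‖ ^ 2 + ‖b‖ ^ 2)) (b : F) :
    h (‖b‖ ^ 2) = ψ b := by
  simpa [hφ] using (hh 0 b).symm

lemma map_add_eq_mul_of_mul_eq_radial [SeminormedAddCommGroup E] [NormedSpace ℝ E]
    [NontrivialTopology E] [SeminormedAddCommGroup F] [NormedSpace ℝ F] [NontrivialTopology F]
    (hφ : φ 0 = 1) (hψ : ψ 0 = 1) (hh : ∀ a b, φ a * ψ b = h (‖a‖ ^ 2 + ‖b‖ ^ 2))
    {s t : ℝ} (hs : 0 ≤ s) (ht : 0 ≤ t) :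
    h (s + t) = h s * h t := by
  obtain ⟨a, rfl⟩ := exists_norm_sq_eq E hs
  obtain ⟨b, rfl⟩ := exists_norm_sq_eq F ht
  rw [← hh, radial_eq_left_of_mul_eq_radial hψ hh, radial_eq_right_of_mul_eq_radial hφ hh]

end RadialProduct

section CharFun

variable {Ω : Type*} [MeasurableSpace Ω] {P : Measure Ω}

section InnerProductSpace

variable {E F : Type*} [NormedAddCommGroup E] [InnerProductSpace ℝ E] [MeasurableSpace E]
  [NormedAddCommGroup F] [InnerProductSpace ℝ F] [MeasurableSpace F]
  {X : Ω → E} {Y : Ω → F}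

lemma charFun_map_eq_integral [OpensMeasurableSpace E] (hX : AEMeasurable X P) (a : E) :
    charFun (P.map X) a = ∫ ω, Complex.exp (Complex.I * (⟪a, X ω⟫ : ℝ)) ∂P := by
  rw [charFun_apply, integral_map hX (by fun_prop)]
  simp_rw [real_inner_comm, mul_comm]

lemma charFun_map_toLp_prodMk_eq_mul [IsFiniteMeasure P] (hX : AEMeasurable X P)
    (hY : AEMeasurable Y P) (hindep : IndepFun X Y P) (t : WithLp 2 (E × F)) :
    charFun (P.map fun ω ↦ toLp 2 (X ω, Y ω)) t =
      charFun (P.map X) t.fst * charFun (P.map Y) t.snd := by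
  have hjoint := (indepFun_iff_map_prod_eq_prod_map_map hX hY).1 hindep
  rw [← WithLp.ofLp_fst, ← WithLp.ofLp_snd, ← charFun_prod, ← hjoint,
    AEMeasurable.map_map_of_aemeasurable (by fun_prop) (by fun_prop), Function.comp_def]

theorem charFun_radial_cauchy_general [Nontrivial E] [Nontrivial F] [IsProbabilityMeasure P]
    (hX : AEMeasurable X P) (hY : AEMeasurable Y P) (hindep : IndepFun X Y P) {h : ℝ → ℂ}
    (hh : ∀ t, charFun (P.map fun ω ↦ toLp 2 (X ω, Y ω)) t = h (‖t‖ ^ 2)) :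
    (∀ s t : ℝ, 0 ≤ s → 0 ≤ t → h (s + t) = h s * h t) ∧
    (∀ a : E, h (‖a‖ ^ 2) = charFun (P.map X) a) ∧
    (∀ b : F, h (‖b‖ ^ 2) = charFun (P.map Y) b) := by
  have : IsProbabilityMeasure (P.map X) := Measure.isProbabilityMeasure_map hX
  have : IsProbabilityMeasure (P.map Y) := Measure.isProbabilityMeasure_map hY
  have hX_zero : charFun (P.map X) 0 = 1 := by simp
  have hY_zero : charFun (P.map Y) 0 = 1 := by simp
  have hmul (a : E) (b : F) :
      charFun (P.map X) a * charFun (P.map Y) b = h (‖a‖ ^ 2 + ‖b‖ ^ 2) := by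
    simpa [charFun_map_toLp_prodMk_eq_mul hX hY hindep, WithLp.prod_norm_sq_eq_of_L2]
      using hh (toLp 2 (a, b))
  exact ⟨fun s t hs ht ↦ map_add_eq_mul_of_mul_eq_radial hX_zero hY_zero hmul hs ht,
    radial_eq_left_of_mul_eq_radial hY_zero hmul, radial_eq_right_of_mul_eq_radial hX_zero hmul⟩

end InnerProductSpace

section EuclideanSpace

variable {ι κ : Type*} [Fintype ι] [Fintype κ] {X : Ω → ι → ℝ} {Y : Ω → κ → ℝ}

lemma charFun_map_toLp_eq_integral (hX : AEMeasurable X P) (a : EuclideanSpace ℝ ι) :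
    charFun (P.map fun ω ↦ toLp 2 (X ω)) a =
      ∫ ω, Complex.exp (Complex.I * ((∑ i, a i * X ω i : ℝ) : ℂ)) ∂P := by
  rw [charFun_map_eq_integral (by fun_prop)]
  simp [PiLp.inner_apply, mul_comm]

lemma charFun_map_toLp_prodMk_eq_integral (hX : AEMeasurable X P) (hY : AEMeasurable Y P)
    (t : WithLp 2 (EuclideanSpace ℝ ι × EuclideanSpace ℝ κ)) :
    charFun (P.map fun ω ↦ toLp 2 (toLp 2 (X ω), toLp 2 (Y ω))) t =
      ∫ ω, Complex.exp (Complex.I *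
        ((∑ i, t.fst i * X ω i) + (∑ j, t.snd j * Y ω j) : ℝ)) ∂P := by
  rw [charFun_map_eq_integral (by fun_prop)]
  simp [WithLp.prod_inner_apply, PiLp.inner_apply, mul_comm]

end EuclideanSpace

end CharFun

/-- If `X ∈ ℝᵐ` and `Y ∈ ℝⁿ` are independent random vectors whose joint characteristic
function `E[exp(i(⟨a,X⟩ + ⟨b,Y⟩))]` equals `h (‖a‖² + ‖b‖²)` for some function `h`, then `h`
satisfies the multiplicative Cauchy equation on `[0,∞)`, and `h (‖a‖²) = φ_X a`,
`h (‖b‖²) = φ_Y b`. -/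
theorem charFun_radial_cauchy
    {Ω : Type*} [MeasurableSpace Ω] (P : Measure Ω) [IsProbabilityMeasure P]
    (m n : ℕ) (hm : 1 ≤ m) (hn : 1 ≤ n)
    (X : Ω → Fin m → ℝ) (Y : Ω → Fin n → ℝ)
    (hX : Measurable X) (hY : Measurable Y)
    (hindep : IndepFun X Y P)
    (h : ℝ → ℂ)
    (hh : ∀ (a : Fin m → ℝ) (b : Fin n → ℝ),
      ∫ ω, Complex.exp (Complex.I * ((∑ i, a i * X ω i) + (∑ j, b j * Y ω j) : ℝ)) ∂P
        = h ((∑ i, (a i) ^ 2) + (∑ j, (b j) ^ 2))) :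
    (∀ s t : ℝ, 0 ≤ s → 0 ≤ t → h (s + t) = h s * h t) ∧
    (∀ a : Fin m → ℝ,
      h (∑ i, (a i) ^ 2) = ∫ ω, Complex.exp (Complex.I * ((∑ i, a i * X ω i : ℝ) : ℂ)) ∂P) ∧
    (∀ b : Fin n → ℝ,
      h (∑ j, (b j) ^ 2) = ∫ ω, Complex.exp (Complex.I * ((∑ j, b j * Y ω j : ℝ) : ℂ)) ∂P) := by
  have : Nonempty (Fin m) := ⟨⟨0, hm⟩⟩
  have : Nonempty (Fin n) := ⟨⟨0, hn⟩⟩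
  have hindep_toLp : IndepFun (fun ω ↦ toLp 2 (X ω)) (fun ω ↦ toLp 2 (Y ω)) P :=
    hindep.comp (WithLp.measurable_toLp 2 _) (WithLp.measurable_toLp 2 _)
  have hradial (t : WithLp 2 (EuclideanSpace ℝ (Fin m) × EuclideanSpace ℝ (Fin n))) :
      charFun (P.map fun ω ↦ toLp 2 (toLp 2 (X ω), toLp 2 (Y ω))) t = h (‖t‖ ^ 2) := by
    rw [charFun_map_toLp_prodMk_eq_integral hX.aemeasurable hY.aemeasurable, hh,
      WithLp.prod_norm_sq_eq_of_L2, EuclideanSpace.real_norm_sq_eq, EuclideanSpace.real_norm_sq_eq]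
  simpa only [(WithLp.toLp_surjective 2).forall, EuclideanSpace.real_norm_sq_eq,
    charFun_map_toLp_eq_integral hX.aemeasurable, charFun_map_toLp_eq_integral hY.aemeasurable]
    using charFun_radial_cauchy_general (by fun_prop) (by fun_prop) hindep_toLp hradial
end

section
/- For every z ∈ ℝ, ∫₀^{2π} e^{iz cos α} dα = ∫₀^{2π} cos(z cos α) dα = ∫₀^{2π} cos(z sin α) dα = 2π J(z), where J(z) = Σ_{k=0}^{∞} (−1)^k (z²/4)^k / (k!)² is the Bessel function of the first kind of order zero. -/
open scoped Real

/-- The Bessel function of the first kind of order zero, defined by its everywhere-convergent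
power series `J(z) = ∑_{k=0}^∞ (−1)^k (z²/4)^k / (k!)²`. -/
noncomputable def besselJ0 (z : ℝ) : ℝ :=
  ∑' k : ℕ, (-1 : ℝ) ^ k * (z ^ 2 / 4) ^ k / ((Nat.factorial k : ℝ)) ^ 2

/-!
Expand `cos (z sin α)` in powers of `sin α` and integrate termwise. The even moments of `sin` over a
period are `2π (2k choose k) / 4^k`, and `(2k choose k) / (2k)! = 1 / (k!)²` turns the resulting
series into `2π J(z)`. A quarter-period shift exchanges `cos α` for `sin α`, while a half-period
shift kills the odd part `sin (z cos α)` of `exp (i z cos α)`.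
-/

open MeasureTheory in
lemma hasSum_intervalIntegral_cos {μ : Measure ℝ} {a b : ℝ} {g : ℝ → ℂ}
    (hg : AEStronglyMeasurable g (μ.restrict (Set.uIoc a b)))
    (hcosh : IntervalIntegrable (fun x ↦ Real.cosh ‖g x‖) μ a b) :
    HasSum (fun k : ℕ ↦ ∫ x in a..b, (-1) ^ k * g x ^ (2 * k) / ((2 * k).factorial : ℂ) ∂μ)
      (∫ x in a..b, Complex.cos (g x) ∂μ) := by
  refine intervalIntegral.hasSum_integral_of_dominated_convergence
    (fun k x ↦ ‖g x‖ ^ (2 * k) / (2 * k).factorial)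
    (fun k ↦ by fun_prop) (fun k ↦ .of_forall fun x _ ↦ ?_)
    (.of_forall fun x _ ↦ (Real.hasSum_cosh ‖g x‖).summable) ?_
    (.of_forall fun x _ ↦ Complex.hasSum_cos (g x))
  · simp
  · simpa only [← Real.cosh_eq_tsum] using hcosh

section Shift

variable {E : Type*} [NormedAddCommGroup E] [NormedSpace ℝ E]

lemma intervalIntegral_comp_add_of_periodic {f : ℝ → E} {T : ℝ} (hf : Function.Periodic f T)
    (a c : ℝ) : ∫ x in a..(a + T), f (x + c) = ∫ x in a..(a + T), f x := by
  rw [intervalIntegral.integral_comp_add_right, add_right_comm, hf.intervalIntegral_add_eq _ a]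

lemma integral_comp_cos_eq_integral_comp_sin (f : ℝ → E) :
    ∫ α in (0 : ℝ)..(2 * π), f (Real.cos α) = ∫ α in (0 : ℝ)..(2 * π), f (Real.sin α) := by
  simpa only [Function.comp_apply, Real.sin_add_pi_div_two, zero_add] using
    intervalIntegral_comp_add_of_periodic (Real.sin_periodic.comp f) 0 (π / 2)

lemma integral_comp_cos_eq_zero_of_odd {f : ℝ → E} (hf : f.Odd) :
    ∫ α in (0 : ℝ)..(2 * π), f (Real.cos α) = 0 := by
  have half_period_shift := intervalIntegral_comp_add_of_periodic (Real.cos_periodic.comp f) 0 π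
  simp only [Function.comp_apply, Real.cos_add_pi, hf (Real.cos _), zero_add,
    intervalIntegral.integral_neg] at half_period_shift
  have : IsAddTorsionFree E := .of_isTorsionFree ℝ E
  exact neg_eq_self.mp half_period_shift

end Shift

lemma integral_sin_pow_two_mul (k : ℕ) :
    ∫ α in (0 : ℝ)..(2 * π), Real.sin α ^ (2 * k) = 2 * π * (k.centralBinom / 4 ^ k) := by
  induction k with
  | zero => simp
  | succ k ih =>
    have centralBinom_succ :
        ((k : ℝ) + 1) * (k + 1).centralBinom = 2 * (2 * k + 1) * k.centralBinom := by
      exact_mod_cast k.succ_mul_centralBinom_succ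
    rw [mul_add_one, integral_sin_pow, ih, Real.sin_zero, Real.sin_two_pi]
    push_cast
    field_simp
    linear_combination (-4 * π * 4 ^ k) * centralBinom_succ

lemma centralBinom_div_factorial_two_mul (𝕜 : Type*) [Field 𝕜] [CharZero 𝕜] (k : ℕ) :
    (k.centralBinom : 𝕜) / (2 * k).factorial = 1 / (k.factorial : 𝕜) ^ 2 := by
  have centralBinom_mul_sq : k.centralBinom * k.factorial ^ 2 = (2 * k).factorial := by
    rw [Nat.centralBinom_eq_two_mul_choose, two_mul, sq, ← mul_assoc,
      Nat.add_choose_mul_factorial_mul_factorial]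
  rw [div_eq_div_iff (mod_cast Nat.factorial_ne_zero _)
    (pow_ne_zero 2 (mod_cast Nat.factorial_ne_zero _)), one_mul]
  exact_mod_cast centralBinom_mul_sq

lemma integral_neg_one_pow_mul_sin_pow_two_mul_div_factorial (z : ℂ) (k : ℕ) :
    ∫ α in (0 : ℝ)..(2 * π), (-1) ^ k * (z * Real.sin α) ^ (2 * k) / ((2 * k).factorial : ℂ)
      = 2 * π * ((-1) ^ k * (z ^ 2 / 4) ^ k / (k.factorial : ℂ) ^ 2) := by
  calc ∫ α in (0 : ℝ)..(2 * π), (-1) ^ k * (z * Real.sin α) ^ (2 * k) / ((2 * k).factorial : ℂ)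
    _ = ∫ α in (0 : ℝ)..(2 * π),
          (-1) ^ k * z ^ (2 * k) / ((2 * k).factorial : ℂ) * ((Real.sin α ^ (2 * k) : ℝ) : ℂ) := by
      congr 1 with α
      push_cast
      ring
    _ = (-1) ^ k * z ^ (2 * k) / ((2 * k).factorial : ℂ)
          * (2 * π * (k.centralBinom / 4 ^ k)) := by
      rw [intervalIntegral.integral_const_mul, intervalIntegral.integral_ofReal,
        integral_sin_pow_two_mul]
      push_cast
      rfl
    _ = 2 * π * ((-1) ^ k * (z ^ 2 / 4) ^ k
          * ((k.centralBinom : ℂ) / ((2 * k).factorial : ℂ))) := by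
      rw [div_pow, ← pow_mul]
      ring
    _ = 2 * π * ((-1) ^ k * (z ^ 2 / 4) ^ k / (k.factorial : ℂ) ^ 2) := by
      rw [centralBinom_div_factorial_two_mul, mul_one_div]

lemma hasSum_integral_cos_mul_sin (z : ℂ) :
    HasSum (fun k : ℕ ↦ 2 * π * ((-1) ^ k * (z ^ 2 / 4) ^ k / (k.factorial : ℂ) ^ 2))
      (∫ α in (0 : ℝ)..(2 * π), Complex.cos (z * Real.sin α)) := by
  have continuous_arg : Continuous fun α : ℝ ↦ z * Real.sin α := by fun_prop
  simpa only [integral_neg_one_pow_mul_sin_pow_two_mul_div_factorial] using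
    hasSum_intervalIntegral_cos (μ := MeasureTheory.volume) continuous_arg.aestronglyMeasurable
      ((Real.continuous_cosh.comp continuous_arg.norm).intervalIntegrable 0 (2 * π))

/-- The Bessel function `J` of order zero on the complex plane, given by the same power series as
its real counterpart `besselJ0`, which it extends. -/
noncomputable def complexBesselJ0 (z : ℂ) : ℂ :=
  ∑' k : ℕ, (-1 : ℂ) ^ k * (z ^ 2 / 4) ^ k / (k.factorial : ℂ) ^ 2

@[norm_cast]
lemma ofReal_besselJ0 (z : ℝ) : (besselJ0 z : ℂ) = complexBesselJ0 z := by
  simp [besselJ0, complexBesselJ0, Complex.ofReal_tsum]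

lemma integral_cos_mul_sin (z : ℂ) :
    ∫ α in (0 : ℝ)..(2 * π), Complex.cos (z * Real.sin α) = 2 * π * complexBesselJ0 z := by
  rw [← (hasSum_integral_cos_mul_sin z).tsum_eq, tsum_mul_left, complexBesselJ0]

lemma integral_exp_mul_cos_mul_I (z : ℂ) :
    ∫ α in (0 : ℝ)..(2 * π), Complex.exp (z * Real.cos α * Complex.I)
      = ∫ α in (0 : ℝ)..(2 * π), Complex.cos (z * Real.cos α) := by
  have integral_sin_eq_zero : ∫ α in (0 : ℝ)..(2 * π), Complex.sin (z * Real.cos α) = 0 :=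
    integral_comp_cos_eq_zero_of_odd (f := fun x : ℝ ↦ Complex.sin (z * x)) fun x ↦ by simp
  simp only [Complex.exp_mul_I]
  rw [intervalIntegral.integral_add, intervalIntegral.integral_mul_const, integral_sin_eq_zero,
    zero_mul, add_zero]
  all_goals exact Continuous.intervalIntegrable (by fun_prop) _ _

theorem integral_exp_cos_eq_besselJ0_general (z : ℂ) :
    ∫ α in (0 : ℝ)..(2 * π), Complex.exp (z * Real.cos α * Complex.I)
        = 2 * π * complexBesselJ0 z ∧
    ∫ α in (0 : ℝ)..(2 * π), Complex.cos (z * Real.cos α) = 2 * π * complexBesselJ0 z ∧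
    ∫ α in (0 : ℝ)..(2 * π), Complex.cos (z * Real.sin α) = 2 * π * complexBesselJ0 z := by
  have integral_cos_mul_cos :
      ∫ α in (0 : ℝ)..(2 * π), Complex.cos (z * Real.cos α) = 2 * π * complexBesselJ0 z :=
    (integral_comp_cos_eq_integral_comp_sin fun x : ℝ ↦ Complex.cos (z * x)).trans
      (integral_cos_mul_sin z)
  exact ⟨(integral_exp_mul_cos_mul_I z).trans integral_cos_mul_cos, integral_cos_mul_cos,
    integral_cos_mul_sin z⟩

/-- For every real `z`,
`∫₀^{2π} e^{iz cos α} dα = ∫₀^{2π} cos(z cos α) dα = ∫₀^{2π} cos(z sin α) dα = 2π J(z)`,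
where `J` is the Bessel function of the first kind of order zero. -/
theorem integral_exp_cos_eq_besselJ0 (z : ℝ) :
    (∫ α in (0 : ℝ)..(2 * π), Complex.exp (((z * Real.cos α : ℝ) : ℂ) * Complex.I))
        = ((2 * π * besselJ0 z : ℝ) : ℂ) ∧
    (∫ α in (0 : ℝ)..(2 * π), Real.cos (z * Real.cos α)) = 2 * π * besselJ0 z ∧
    (∫ α in (0 : ℝ)..(2 * π), Real.cos (z * Real.sin α)) = 2 * π * besselJ0 z := by
  have complex_case := integral_exp_cos_eq_besselJ0_general z
  norm_cast at complex_case
  simpa only [intervalIntegral.integral_ofReal, Complex.ofReal_inj] using complex_case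
end

section
/- Let N ≥ 1 and let x₁,…,x_N be real numbers. Then ∫₀^{2π} |(1/N²) Σ_{j,k=1}^{N} e^{i(x_j cos α + x_k sin α)} − e^{−1/2}|² dα = 2π [ (1/N⁴) Σ_{n,j,k,l=1}^{N} J(√((x_n − x_k)² + (x_j − x_l)²)) − (2e^{−1/2}/N²) Σ_{n,j=1}^{N} J(√(x_n² + x_j²)) + e^{−1} ], where J(z) = Σ_{k=0}^{∞} (−1)^k (z²/4)^k / (k!)² is the Bessel function of the first kind of order zero. -/
open scoped BigOperators Real

/-! The integrand is `‖∑ wᵢ e^{i⟨zᵢ, u⟩}‖²` at the point `u = (cos α, sin α)` of the unit circle,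
the subtracted constant being a term of frequency `z = 0`. Expanding the square gives exponentials
of frequencies `zᵢ - zⱼ`. By rotation invariance the exponential of frequency `z` has the same
integral as that of frequency `(‖z‖, 0)`, whose imaginary part integrates to zero by symmetry.
Integrating the power series of the real part `cos (‖z‖ cos α)` term by term gives the Bessel series
`2π J(‖z‖)`. -/

open Complex (I)
open ComplexConjugate

section BesselIntegral

theorem besselJ0_zero : besselJ0 0 = 1 := by
  rw [besselJ0, tsum_eq_single 0 fun k hk ↦ by simp [hk]]
  simp

theorem integral_cos_pow_even (k : ℕ) :
    ∫ α in (0 : ℝ)..(2 * π), Real.cos α ^ (2 * k) = 2 * π * (k.centralBinom / 4 ^ k) := by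
  induction k with
  | zero => simp
  | succ k ih =>
    have centralBinom_succ :
        ((k + 1).centralBinom : ℝ) = 2 * (2 * k + 1) * k.centralBinom / (k + 1) := by
      rw [eq_div_iff (by positivity), mul_comm]
      exact_mod_cast k.succ_mul_centralBinom_succ
    rw [show 2 * (k + 1) = 2 * k + 2 by ring, integral_cos_pow, ih, centralBinom_succ,
      Real.sin_two_pi, Real.sin_zero]
    push_cast
    field_simp
    ring

theorem hasSum_integral_cos_const_mul_cos (r : ℝ) :
    HasSum (fun k : ℕ ↦ ∫ α in (0 : ℝ)..(2 * π),
        (-1) ^ k * (r * Real.cos α) ^ (2 * k) / (2 * k).factorial)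
      (∫ α in (0 : ℝ)..(2 * π), Real.cos (r * Real.cos α)) := by
  have norm_term_le (k : ℕ) (α : ℝ) :
      ‖(-1) ^ k * (r * Real.cos α) ^ (2 * k) / (2 * k).factorial‖
        ≤ |r| ^ (2 * k) / (2 * k).factorial := by
    simp only [norm_div, norm_mul, norm_pow, norm_neg, norm_one, one_pow, one_mul,
      Real.norm_eq_abs, Nat.abs_cast]
    gcongr
    exact mul_le_of_le_one_right (abs_nonneg r) (Real.abs_cos_le_one α)
  have summable_bound : Summable fun k : ℕ ↦ |r| ^ (2 * k) / (2 * k).factorial :=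
    (Real.summable_pow_div_factorial |r|).comp_injective (mul_right_injective₀ two_ne_zero)
  exact intervalIntegral.hasSum_integral_of_dominated_convergence
    (fun k _ ↦ |r| ^ (2 * k) / (2 * k).factorial)
    (fun k ↦ Continuous.aestronglyMeasurable (by fun_prop))
    (fun k ↦ .of_forall fun α _ ↦ norm_term_le k α)
    (.of_forall fun _ _ ↦ summable_bound)
    intervalIntegrable_const
    (.of_forall fun α _ ↦ Real.hasSum_cos (r * Real.cos α))

theorem integral_cos_const_mul_cos (r : ℝ) :
    ∫ α in (0 : ℝ)..(2 * π), Real.cos (r * Real.cos α) = 2 * π * besselJ0 r := by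
  rw [← (hasSum_integral_cos_const_mul_cos r).tsum_eq, besselJ0, ← tsum_mul_left]
  congr! 2 with k
  have factorial_eq : ((2 * k).factorial : ℝ) = k.centralBinom * k.factorial ^ 2 := by
    norm_cast
    rw [Nat.centralBinom, two_mul, sq, ← mul_assoc, Nat.add_choose_mul_factorial_mul_factorial]
  have centralBinom_ne_zero : (k.centralBinom : ℝ) ≠ 0 := mod_cast k.centralBinom_ne_zero
  calc ∫ α in (0 : ℝ)..(2 * π), (-1) ^ k * (r * Real.cos α) ^ (2 * k) / (2 * k).factorial
      = ∫ α in (0 : ℝ)..(2 * π),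
          (-1) ^ k * r ^ (2 * k) / (2 * k).factorial * Real.cos α ^ (2 * k) := by
        congr! 2 with α
        ring
    _ = (-1) ^ k * r ^ (2 * k) / (2 * k).factorial * (2 * π * (k.centralBinom / 4 ^ k)) := by
        rw [intervalIntegral.integral_const_mul, integral_cos_pow_even]
    _ = 2 * π * ((-1) ^ k * (r ^ 2 / 4) ^ k / (k.factorial : ℝ) ^ 2) := by
        rw [factorial_eq, pow_mul, div_pow]
        field_simp

theorem integral_comp_sub_of_periodic {E : Type*} [NormedAddCommGroup E] [NormedSpace ℝ E]
    {f : ℝ → E} {T : ℝ} (hf : Function.Periodic f T) (t : ℝ) :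
    ∫ α in (0 : ℝ)..T, f (α - t) = ∫ α in (0 : ℝ)..T, f α := by
  rw [intervalIntegral.integral_comp_sub_right f]
  convert! hf.intervalIntegral_add_eq (0 - t) 0 using 2 <;> ring

theorem integral_sin_const_mul_cos (r : ℝ) :
    ∫ α in (0 : ℝ)..(2 * π), Real.sin (r * Real.cos α) = 0 := by
  have periodic : Function.Periodic (fun α ↦ Real.sin (r * Real.cos α)) (2 * π) :=
    Real.cos_periodic.comp fun t ↦ Real.sin (r * t)
  have integral_eq_neg := integral_comp_sub_of_periodic periodic π
  simp only [Real.cos_sub_pi, mul_neg, Real.sin_neg,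
    intervalIntegral.integral_neg] at integral_eq_neg
  exact self_eq_neg.mp integral_eq_neg.symm

theorem integral_exp_const_mul_cos_mul_I (r : ℝ) :
    ∫ α in (0 : ℝ)..(2 * π), Complex.exp ((r * Real.cos α : ℝ) * I) = 2 * π * besselJ0 r := by
  simp only [Complex.exp_mul_I, ← Complex.ofReal_cos, ← Complex.ofReal_sin]
  rw [intervalIntegral.integral_add (Continuous.intervalIntegrable (by fun_prop) _ _)
      (Continuous.intervalIntegrable (by fun_prop) _ _), intervalIntegral.integral_mul_const,
    intervalIntegral.integral_ofReal, intervalIntegral.integral_ofReal, integral_cos_const_mul_cos,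
    integral_sin_const_mul_cos]
  push_cast
  ring

end BesselIntegral

section PlaneWave

/-- The plane wave `u ↦ e^{i⟨z, u⟩}` of frequency `z` on the unit circle, as a function of the angle
`α` of `u = (cos α, sin α)`. The plane of frequencies is identified with `ℂ`. -/
noncomputable def planeWave (z : ℂ) (α : ℝ) : ℂ :=
  Complex.exp ((z.re * Real.cos α + z.im * Real.sin α : ℝ) * I)

@[fun_prop]
theorem continuous_planeWave (z : ℂ) : Continuous (planeWave z) := by
  unfold planeWave
  fun_prop

theorem planeWave_zero (α : ℝ) : planeWave 0 α = 1 := by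
  simp [planeWave]

theorem planeWave_mul_conj (z w : ℂ) (α : ℝ) :
    planeWave z α * conj (planeWave w α) = planeWave (z - w) α := by
  simp only [planeWave, ← Complex.exp_conj, ← Complex.exp_add, map_mul, Complex.conj_I,
    Complex.conj_ofReal, Complex.sub_re, Complex.sub_im]
  push_cast
  ring_nf

theorem planeWave_eq_exp_norm_mul_cos (z : ℂ) (α : ℝ) :
    planeWave z α = Complex.exp ((‖z‖ * Real.cos (α - z.arg) : ℝ) * I) := by
  have phase_eq : z.re * Real.cos α + z.im * Real.sin α = ‖z‖ * Real.cos (α - z.arg) := by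
    rw [Real.cos_sub]
    linear_combination -Real.cos α * Complex.norm_mul_cos_arg z
      - Real.sin α * Complex.norm_mul_sin_arg z
  rw [planeWave, phase_eq]

theorem integral_planeWave (z : ℂ) :
    ∫ α in (0 : ℝ)..(2 * π), planeWave z α = 2 * π * besselJ0 ‖z‖ := by
  have periodic :
      Function.Periodic (fun α ↦ Complex.exp ((‖z‖ * Real.cos α : ℝ) * I)) (2 * π) :=
    Real.cos_periodic.comp fun t ↦ Complex.exp ((‖z‖ * t : ℝ) * I)
  simp only [planeWave_eq_exp_norm_mul_cos]
  rw [integral_comp_sub_of_periodic periodic, integral_exp_const_mul_cos_mul_I]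

variable {ι : Type*} [Fintype ι]

theorem sq_norm_sum_mul_planeWave (w z : ι → ℂ) (α : ℝ) :
    ((‖∑ i, w i * planeWave (z i) α‖ ^ 2 : ℝ) : ℂ)
      = ∑ i, ∑ j, w i * conj (w j) * planeWave (z i - z j) α := by
  rw [Complex.ofReal_pow, ← Complex.mul_conj', map_sum, Finset.sum_mul_sum]
  simp only [map_mul, ← planeWave_mul_conj, mul_mul_mul_comm]

theorem integral_sq_norm_sum_mul_planeWave (w z : ι → ℂ) :
    ((∫ α in (0 : ℝ)..(2 * π), ‖∑ i, w i * planeWave (z i) α‖ ^ 2 : ℝ) : ℂ)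
      = 2 * π * ∑ i, ∑ j, w i * conj (w j) * besselJ0 ‖z i - z j‖ := by
  have integral_term (i j : ι) :
      ∫ α in (0 : ℝ)..(2 * π), w i * conj (w j) * planeWave (z i - z j) α
        = 2 * π * (w i * conj (w j) * besselJ0 ‖z i - z j‖) := by
    rw [intervalIntegral.integral_const_mul, integral_planeWave]
    ring
  rw [← intervalIntegral.integral_ofReal]
  simp only [sq_norm_sum_mul_planeWave]
  rw [intervalIntegral.integral_finsetSum
    fun i _ ↦ Continuous.intervalIntegrable (by fun_prop) _ _, Finset.mul_sum]
  congr! 1 with i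
  rw [intervalIntegral.integral_finsetSum
    fun j _ ↦ Continuous.intervalIntegrable (by fun_prop) _ _, Finset.mul_sum]
  simp only [integral_term]

end PlaneWave

theorem integral_sq_abs_empirical_charFun_eq_besselJ0_general {ι : Type*} [Fintype ι]
    (w : ι → ℝ) (z : ι → ℂ) (c : ℝ) :
    ∫ α in (0 : ℝ)..(2 * π), ‖∑ i, w i * planeWave (z i) α - c‖ ^ 2
      = 2 * π * (∑ i, ∑ j, w i * w j * besselJ0 ‖z i - z j‖
          - 2 * c * ∑ i, w i * besselJ0 ‖z i‖ + c ^ 2) := by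
  -- The index `none` carries the constant `-c`, as a plane wave of frequency zero.
  have integral_eq := integral_sq_norm_sum_mul_planeWave (ι := Option ι)
    (fun i ↦ i.elim (-c) (w ·)) (fun i ↦ i.elim 0 z)
  simp only [Fintype.sum_option, Option.elim_none, Option.elim_some, planeWave_zero, mul_one,
    map_neg, Complex.conj_ofReal, sub_zero, zero_sub, norm_neg, norm_zero, besselJ0_zero,
    Finset.sum_add_distrib] at integral_eq
  norm_cast at integral_eq
  have integrand_eq (α : ℝ) : ∑ i, w i * planeWave (z i) α - c
      = (-c : ℝ) + ∑ i, w i * planeWave (z i) α := by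
    push_cast
    ring
  simp only [integrand_eq, integral_eq, mul_right_comm _ (-c), mul_assoc (-c), ← Finset.sum_mul,
    ← Finset.mul_sum]
  ring

/-- Surface-integral representation of the univariate test statistic: for real numbers
`x₁,…,x_N`,
`∫₀^{2π} |(1/N²) ∑_{j,k} e^{i(x_j cos α + x_k sin α)} − e^{−1/2}|² dα
  = 2π [ (1/N⁴) ∑_{n,j,k,l} J(√((x_n−x_k)² + (x_j−x_l)²))
         − (2e^{−1/2}/N²) ∑_{n,j} J(√(x_n² + x_j²)) + e^{−1} ]`. -/
theorem integral_sq_abs_empirical_charFun_eq_besselJ0 (N : ℕ) (hN : 1 ≤ N) (x : Fin N → ℝ) :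
    (∫ α in (0 : ℝ)..(2 * π),
        ‖((1 / (N : ℂ) ^ 2) *
            (∑ j, ∑ k,
              Complex.exp (((x j * Real.cos α + x k * Real.sin α : ℝ) : ℂ) * Complex.I))
            - ((Real.exp (-(1 : ℝ) / 2) : ℝ) : ℂ))‖ ^ 2)
      = 2 * π *
          ((1 / (N : ℝ) ^ 4) *
              (∑ n, ∑ j, ∑ k, ∑ l,
                besselJ0 (Real.sqrt ((x n - x k) ^ 2 + (x j - x l) ^ 2)))
            - (2 * Real.exp (-(1 : ℝ) / 2) / (N : ℝ) ^ 2) *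
              (∑ n, ∑ j, besselJ0 (Real.sqrt ((x n) ^ 2 + (x j) ^ 2)))
            + Real.exp (-1 : ℝ)) := by
  have exp_sq : Real.exp (-(1 : ℝ) / 2) ^ 2 = Real.exp (-1) := by
    rw [← Real.exp_nat_mul]
    norm_num
  have besselJ0_norm (z : ℂ) : besselJ0 ‖z‖ = besselJ0 √(z.re ^ 2 + z.im ^ 2) := by
    rw [Complex.norm_eq_sqrt_sq_add_sq]
  have integral_eq := integral_sq_abs_empirical_charFun_eq_besselJ0_general
    (fun _ : Fin N × Fin N ↦ 1 / (N : ℝ) ^ 2) (fun p ↦ ⟨x p.1, x p.2⟩) (Real.exp (-(1 : ℝ) / 2))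
  simp only [planeWave, Fintype.sum_prod_type, ← Finset.mul_sum, besselJ0_norm, Complex.sub_re,
    Complex.sub_im, exp_sq] at integral_eq
  push_cast at integral_eq ⊢
  rw [integral_eq]
  ring
end
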